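/- In the setting of the Denjoy construction—R an irrational rotation of T¹, ν = Σₙ aₙ δ_{xₙ} + b·Leb with xₙ = Rⁿ(x₀), aₙ > 0, Σaₙ < 1, b = 1 − Σaₙ > 0, h the quantile map of ν, Iₙ = h^{-1}{xₙ} = [cₙ,dₙ], A = T¹ \ ⋃ₙ [cₙ,dₙ), and f̃ = (h|_A)^{-1} ∘ R ∘ (h|_A)—the map f̃ extends to an orientation-preserving homeomorphism f of T¹ such that f(Iₙ) = I_{n+1} for all n ∈ ℤ, the open intervals int Iₙ are wandering for f, and h ∘ f = R ∘ h on all of T¹ (so f is semiconjugate to R). In particular f is a circle homeomorphism of Denjoy type. -/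

import Mathlib

open Set Function MeasureTheory

noncomputable section

/-- The circle `T¹ = ℝ/ℤ`. -/
abbrev T1 := AddCircle (1 : ℝ)

/-- The `n`-th iterate (`n ∈ ℤ`) of a bijection. -/
def zIter {X : Type*} (g : Equiv.Perm X) (n : ℤ) : X → X := fun x => (g ^ n) x

/-- A set of integers is syndetic if it has bounded gaps. -/
def ZSyndetic (S : Set ℤ) : Prop := ∃ N : ℕ, ∀ n : ℤ, ∃ k ∈ S, |k - n| ≤ (N : ℤ)

/-- A homeomorphism `α` of a metric space is almost periodic if for every `ε > 0` the set
`{n ∈ ℤ | dist(αⁿ, Id) < ε}` is syndetic. -/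
def AlmostPeriodicHomeo {Θ : Type*} [MetricSpace Θ] (α : Θ ≃ₜ Θ) : Prop :=
  ∀ ε > (0 : ℝ), ZSyndetic {n : ℤ | ∀ θ : Θ, dist (zIter α.toEquiv n θ) θ < ε}

/-- A homeomorphism is minimal if every (two-sided) orbit is dense. -/
def MinimalHomeo {Θ : Type*} [TopologicalSpace Θ] (α : Θ ≃ₜ Θ) : Prop :=
  ∀ θ : Θ, Dense (range fun n : ℤ => zIter α.toEquiv n θ)

/-- A self-map `g` of a metric space is almost periodic if its family of iterates
is (uniformly) equicontinuous. -/
def AlmostPeriodicMap {Y : Type*} [MetricSpace Y] (g : Y → Y) : Prop :=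
  ∀ ε > (0 : ℝ), ∃ δ > (0 : ℝ), ∀ y y' : Y, dist y y' < δ → ∀ n : ℕ, dist (g^[n] y) (g^[n] y') < ε

/-- `h` is a factor map (semiconjugacy) from `(X, f)` onto `(Y, g)`:
a continuous surjection with `h ∘ f = g ∘ h`.  Then `(X, f)` is a topological
extension of `(Y, g)`. -/
def IsFactorMap {X Y : Type*} [TopologicalSpace X] [TopologicalSpace Y]
    (f : X → X) (g : Y → Y) (h : X → Y) : Prop :=
  Continuous h ∧ Surjective h ∧ h ∘ f = g ∘ h

/-- A map `h` is almost 1-1 if the set of points of the target having exactly one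
preimage is dense. -/
def AlmostOneOne {X Y : Type*} [TopologicalSpace Y] (h : X → Y) : Prop :=
  Dense {y : Y | ∃! x, h x = y}

/-- A witness that the system `(X, f)` is almost automorphic: an almost periodic
homeomorphism of a compact metric space which is an almost 1-1 factor of `(X, f)`. -/
structure AAWitness {X : Type*} [TopologicalSpace X] (f : X → X) where
  (Y : Type)
  [mY : MetricSpace Y]
  [cY : CompactSpace Y]
  (g : Y ≃ₜ Y)
  (hmap : X → Y)
  (factor : IsFactorMap f (⇑g) hmap)
  (a11 : AlmostOneOne hmap)
  (ap : ∀ ε > (0 : ℝ), ∃ δ > (0 : ℝ), ∀ y y' : Y, dist y y' < δ →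
        ∀ n : ℤ, dist (zIter g.toEquiv n y) (zIter g.toEquiv n y') < ε)

/-- `M` is a minimal set of `f`: nonempty, closed, invariant, and without proper
nonempty closed invariant subsets. -/
def IsMinimalSet {X : Type*} [TopologicalSpace X] (f : X → X) (M : Set X) : Prop :=
  M.Nonempty ∧ IsClosed M ∧ f '' M = M ∧
    ∀ M' ⊆ M, M'.Nonempty → IsClosed M' → f '' M' ⊆ M' → M' = M

/-- The restriction of `f` to an invariant set. -/
def restrictMap {X : Type*} {f : X → X} {M : Set X} (hM : Set.MapsTo f M M) : ↥M → ↥M :=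
  Set.MapsTo.restrict f M M hM

/-- `M` is an almost automorphic minimal set of `f`: `f` restricted to `M` admits an
almost periodic almost 1-1 factor. -/
def IsAAMinimal {X : Type*} [MetricSpace X] (f : X → X) (M : Set X) : Prop :=
  IsMinimalSet f M ∧ ∀ hM : Set.MapsTo f M M, Nonempty (AAWitness (restrictMap hM))

/-- `M` is an almost periodic minimal set of `f`: the family of iterates of the
restriction of `f` to `M` is equicontinuous. -/
def IsAPMinimal {X : Type*} [MetricSpace X] (f : X → X) (M : Set X) : Prop :=
  IsMinimalSet f M ∧ ∀ hM : Set.MapsTo f M M, AlmostPeriodicMap (restrictMap hM)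

/-- A subset of a product is pinched if some fibre is a singleton. -/
def Pinched {Θ X : Type*} (A : Set (Θ × X)) : Prop := ∃ θ : Θ, ∃! x : X, (θ, x) ∈ A

/-- An `α`-forced increasing interval map on `Θ × I`: a continuous skew product over `α`
whose fibre maps are strictly increasing. -/
def ForcedIncreasing {Θ : Type*} [TopologicalSpace Θ] {I : Set ℝ} (α : Θ → Θ)
    (f : Θ × ↥I → Θ × ↥I) : Prop :=
  Continuous f ∧ (∀ p : Θ × ↥I, (f p).1 = α p.1) ∧
    ∀ θ : Θ, StrictMono fun x : ↥I => (f (θ, x)).2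

/-- The fibre of `M ⊆ Θ × I` over `θ`, as a set of reals. -/
def fiberSet {Θ : Type*} {I : Set ℝ} (M : Set (Θ × ↥I)) (θ : Θ) : Set ℝ :=
  (fun x : ↥I => (x : ℝ)) '' {x : ↥I | (θ, x) ∈ M}

/-- The filled-in envelope `[φ⁻_M, φ⁺_M]` of `M`, where `φ⁻_M(θ) = inf M_θ` and
`φ⁺_M(θ) = sup M_θ`. -/
def FilledEnvelope {Θ : Type*} {I : Set ℝ} (M : Set (Θ × ↥I)) : Set (Θ × ↥I) :=
  {p : Θ × ↥I | sInf (fiberSet M p.1) ≤ (p.2 : ℝ) ∧ (p.2 : ℝ) ≤ sSup (fiberSet M p.1)}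

/-- The graph of a curve `γ : Θ → I`. -/
def curveGraph {Θ : Type*} {I : Set ℝ} (γ : Θ → ↥I) : Set (Θ × ↥I) :=
  {p : Θ × ↥I | p.2 = γ p.1}

/-- The conclusion of the blow-up construction (properties (i)-(v) of the main theorem):
`f̂` is a topological extension of `f` via the fibre-respecting factor map `h`, `f̂` is an
`α`-forced increasing interval map, the fibre maps of `h` are non-decreasing, `h` is
injective off `h⁻¹(Γ)`, countably many points of `Γ` have non-degenerate vertical-segment
preimages while all other points of `Γ` have singleton preimages, and `h⁻¹(Γ)` contains
the graph of no continuous curve. -/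
def BlowUpConclusion {Θ : Type*} [TopologicalSpace Θ] {I : Set ℝ}
    (α : Θ → Θ) (f : Θ × ↥I → Θ × ↥I) (γ : Θ → ↥I)
    (fhat : Θ × ↥I → Θ × ↥I) (h : Θ × ↥I → Θ × ↥I) : Prop :=
  IsFactorMap fhat f h ∧ (∀ p : Θ × ↥I, (h p).1 = p.1) ∧
  ForcedIncreasing α fhat ∧
  (∀ θ : Θ, Monotone fun x : ↥I => (h (θ, x)).2) ∧
  Set.InjOn h (h ⁻¹' curveGraph γ)ᶜ ∧
  (∃ C : Set (Θ × ↥I), C ⊆ curveGraph γ ∧ C.Countable ∧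
    (∀ p ∈ C, ∃ x₁ x₂ : ↥I, x₁ < x₂ ∧ h ⁻¹' {p} = {p.1} ×ˢ Set.Icc x₁ x₂) ∧
    (∀ p ∈ curveGraph γ \ C, ∃ x : ↥I, h ⁻¹' {p} = {(p.1, x)})) ∧
  (∀ η : Θ → ↥I, Continuous η → ¬ (curveGraph η ⊆ h ⁻¹' curveGraph γ))


/-- The identification of `T¹` with `[0,1)`. -/
def lift1 : T1 → ℝ := fun x => ((AddCircle.equivIco 1 0 x : ↥(Set.Ico (0:ℝ) (0+1))) : ℝ)


/-! ### The lift to the real line -/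

/-- The lift of the Denjoy homeomorphism. -/
def denjoyF (K L H : ℝ → ℝ) (ρ s : ℝ) : ℝ :=
  K (H s + ρ) - (K (H s) - s) *
    (if K (H s) = L (H s) then 1 else (K (H s + ρ) - L (H s + ρ)) / (K (H s) - L (H s)))

theorem denjoy_H_eq {K L H : ℝ → ℝ} (hH1 : ∀ s, L (H s) ≤ s) (hH2 : ∀ s, s ≤ K (H s))
    (hlt : ∀ y y', y < y' → K y < L y') {s y : ℝ} (h1 : L y ≤ s) (h2 : s ≤ K y) : H s = y := by
  rcases lt_trichotomy (H s) y with h | h | h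
  · have := hlt _ _ h; have := hH2 s; linarith
  · exact h
  · have := hlt _ _ h; have := hH1 s; linarith

theorem denjoy_lift (K L H : ℝ → ℝ) (ρ : ℝ)
    (hH1 : ∀ s, L (H s) ≤ s) (hH2 : ∀ s, s ≤ K (H s))
    (hlt : ∀ y y', y < y' → K y < L y') (hLK : ∀ y, L y ≤ K y)
    (hj : ∀ y, K y = L y ↔ K (y + ρ) = L (y + ρ))
    (hK1 : ∀ y, K (y + 1) = K y + 1) (hL1 : ∀ y, L (y + 1) = L y + 1) :
    ∃ F : ℝ ≃o ℝ, (∀ s, H (F s) = H s + ρ) ∧ (∀ s, F (s + 1) = F s + 1) ∧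
      (∀ y, F (K y) = K (y + ρ)) ∧ Monotone H ∧ (∀ s, H (s + 1) = H s + 1) := by
  have hu : ∀ {s y : ℝ}, L y ≤ s → s ≤ K y → H s = y := fun h1 h2 => denjoy_H_eq hH1 hH2 hlt h1 h2
  have hHmono : Monotone H := by
    intro s t hst
    by_contra hc
    have := hlt _ _ (not_le.1 hc)
    have := hH1 s
    have := hH2 t
    linarith
  have hHadd : ∀ s, H (s + 1) = H s + 1 := by
    intro s
    apply hu
    · rw [hL1]; linarith [hH1 s]
    · rw [hK1]; linarith [hH2 s]
  set r : ℝ → ℝ := fun y => if K y = L y then 1 else (K (y + ρ) - L (y + ρ)) / (K y - L y) with hr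
  have hrpos : ∀ y, 0 < r y := by
    intro y
    simp only [hr]
    split_ifs with h
    · exact one_pos
    · have h1 := lt_of_le_of_ne (hLK y) (Ne.symm h)
      have h2 := lt_of_le_of_ne (hLK (y + ρ)) (Ne.symm (fun h' => h ((hj y).2 h')))
      exact div_pos (by linarith) (by linarith)
  have hrmul : ∀ y, (K y - L y) * r y = K (y + ρ) - L (y + ρ) := by
    intro y
    simp only [hr]
    split_ifs with h
    · rw [h, (hj y).1 h]; ring
    · have : K y - L y ≠ 0 := sub_ne_zero.2 h
      field_simp
  have hF : ∀ s, denjoyF K L H ρ s = K (H s + ρ) - (K (H s) - s) * r (H s) := fun s => rfl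
  have hFle : ∀ s, denjoyF K L H ρ s ≤ K (H s + ρ) := by
    intro s
    rw [hF]
    have := mul_nonneg (sub_nonneg.2 (hH2 s)) (hrpos (H s)).le
    linarith
  have hFge : ∀ s, L (H s + ρ) ≤ denjoyF K L H ρ s := by
    intro s
    rw [hF]
    have := mul_le_mul_of_nonneg_right (sub_le_sub_left (hH1 s) (K (H s))) (hrpos (H s)).le
    rw [hrmul] at this
    linarith
  have hHF : ∀ s, H (denjoyF K L H ρ s) = H s + ρ := fun s => hu (hFge s) (hFle s)
  have hmono : StrictMono (denjoyF K L H ρ) := by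
    intro s t hst
    rcases (hHmono hst.le).eq_or_lt with h | h
    · rw [hF, hF, h]
      have := mul_lt_mul_of_pos_right hst (hrpos (H t))
      linarith
    · have h1 := hlt (H s + ρ) (H t + ρ) (by linarith)
      linarith [hFle s, hFge t]
  have hsurj : Function.Surjective (denjoyF K L H ρ) := by
    intro t
    set y := H t - ρ with hy
    have hy' : y + ρ = H t := by rw [hy]; ring
    have h1 := hH1 t
    have h2 := hH2 t
    have hm := hrmul y
    rw [hy'] at hm
    have hrp := hrpos y
    have hs : H (K y - (K (H t) - t) / r y) = y := by
      apply hu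
      · have : (K (H t) - t) / r y ≤ K y - L y := by
          rw [div_le_iff₀ hrp, hm]; linarith
        linarith
      · have : 0 ≤ (K (H t) - t) / r y := div_nonneg (by linarith) hrp.le
        linarith
    refine ⟨K y - (K (H t) - t) / r y, ?_⟩
    rw [hF, hs, hy']
    field_simp
    ring
  refine ⟨StrictMono.orderIsoOfSurjective _ hmono hsurj, hHF, ?_, ?_, hHmono, hHadd⟩
  · intro s
    have hr1 : r (H s + 1) = r (H s) := by
      simp only [hr, hK1, hL1, add_right_comm (H s) 1 ρ, add_left_inj, add_sub_add_right_eq_sub]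
    change denjoyF K L H ρ (s + 1) = denjoyF K L H ρ s + 1
    rw [hF, hF, hHadd, hr1, hK1, add_right_comm, hK1]
    ring
  · intro y
    have : H (K y) = y := hu (hLK y) le_rfl
    change denjoyF K L H ρ (K y) = _
    rw [hF, this]; ring

/-! ### Circle facts -/

theorem lift1_coe (t : ℝ) : lift1 (t : T1) = Int.fract t := by
  have := AddCircle.coe_equivIco_mk_apply (p := (1:ℝ)) t
  simpa [lift1] using this

theorem coe_lift1 (z : T1) : ((lift1 z : ℝ) : T1) = z := AddCircle.coe_equivIco

theorem lift1_nonneg (z : T1) : 0 ≤ lift1 z := (AddCircle.equivIco 1 0 z).2.1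

theorem lift1_lt_one (z : T1) : lift1 z < 1 := by
  have := (AddCircle.equivIco (1:ℝ) 0 z).2.2
  simpa [lift1] using this

theorem lift1_inj {z w : T1} (hh : lift1 z = lift1 w) : z = w := by
  rw [← coe_lift1 z, ← coe_lift1 w, hh]

theorem lift1_coe_of_mem {t : ℝ} (h0 : 0 ≤ t) (h1 : t < 1) : lift1 (t : T1) = t := by
  rw [lift1_coe]; exact Int.fract_eq_self.2 ⟨h0, h1⟩

theorem coe_add_intCast (t : ℝ) (n : ℤ) : ((t + n : ℝ) : T1) = (t : T1) := by
  have : ((n : ℝ) : T1) = 0 := by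
    rw [AddCircle.coe_eq_zero_iff]; exact ⟨n, by simp⟩
  rw [AddCircle.coe_add, this, add_zero]

theorem coe_add_one (t : ℝ) : ((t + 1 : ℝ) : T1) = (t : T1) := by
  simpa using coe_add_intCast t 1

theorem lift1_measurable : Measurable lift1 :=
  measurable_subtype_coe.comp (AddCircle.measurableEquivIco (1:ℝ) 0).measurable

theorem sbtw_iff_lift (u v w : T1) :
    sbtw u v w ↔ ∃ s p q : ℝ, (p : T1) = u ∧ (q : T1) = v ∧ (s : T1) = w ∧
      s < p ∧ p < q ∧ q < s + 1 := by
  have h01 : (0:ℝ) < 1 := one_pos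
  rw [sbtw_iff_not_btw]
  constructor
  · induction u using QuotientAddGroup.induction_on with | H u => ?_
    induction v using QuotientAddGroup.induction_on with | H v => ?_
    induction w using QuotientAddGroup.induction_on with | H w => ?_
    intro hb
    rw [QuotientAddGroup.btw_coe_iff, not_le] at hb
    refine ⟨w, toIocMod Fact.out w u, toIcoMod Fact.out w v, ?_, ?_, rfl, ?_, hb, ?_⟩
    · have := toIocMod_add_toIocDiv_zsmul (Fact.out : (0:ℝ) < 1) w u
      conv_rhs => rw [← this]
      simpa using (coe_add_intCast _ _).symm
    · have := toIcoMod_add_toIcoDiv_zsmul (Fact.out : (0:ℝ) < 1) w v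
      conv_rhs => rw [← this]
      simpa using (coe_add_intCast _ _).symm
    · exact left_lt_toIocMod _ _ _
    · exact toIcoMod_lt_right _ _ _
  · rintro ⟨s, p, q, rfl, rfl, rfl, h1, h2, h3⟩
    have := QuotientAddGroup.btw_coe_iff (p := (1:ℝ)) (x₁ := s) (x₂ := q) (x₃ := p)
    intro hb
    rw [this, (toIcoMod_eq_self _).2 ⟨by linarith, h3⟩,
      (toIocMod_eq_self _).2 ⟨h1, by linarith⟩] at hb
    linarith

theorem exists_circle_map (F : ℝ → ℝ) (hc : Continuous F) (h1 : ∀ s, F (s + 1) = F s + 1) :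
    ∃ f : T1 → T1, Continuous f ∧ ∀ s : ℝ, f (s : T1) = ((F s : ℝ) : T1) := by
  have hp : Function.Periodic (fun s : ℝ => ((F s : ℝ) : T1)) 1 := by
    intro s
    simp only [h1, coe_add_one]
  refine ⟨hp.lift, ?_, fun s => rfl⟩
  exact Continuous.quotient_lift ((AddCircle.continuous_mk' 1).comp hc) _

theorem exists_circle_homeo (F : ℝ ≃o ℝ) (h1 : ∀ s, F (s + 1) = F s + 1) :
    ∃ f : T1 ≃ₜ T1, ∀ s : ℝ, f (s : T1) = ((F s : ℝ) : T1) := by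
  have h1' : ∀ s, F.symm (s + 1) = F.symm s + 1 := by
    intro s
    apply F.injective
    rw [h1]; simp
  obtain ⟨f, hf, hf'⟩ := exists_circle_map F F.continuous h1
  obtain ⟨g, hg, hg'⟩ := exists_circle_map F.symm F.symm.continuous h1'
  refine ⟨⟨⟨f, g, ?_, ?_⟩, hf, hg⟩, hf'⟩
  · intro z
    rw [← coe_lift1 z, hf', hg']; simp
  · intro z
    rw [← coe_lift1 z, hg', hf']; simp

theorem sbtw_map_of_lift (F : ℝ ≃o ℝ) (h1 : ∀ s, F (s + 1) = F s + 1) (f : T1 → T1)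
    (hf : ∀ s : ℝ, f (s : T1) = ((F s : ℝ) : T1)) (u v w : T1) (hs : sbtw u v w) :
    sbtw (f u) (f v) (f w) := by
  rw [sbtw_iff_lift] at hs ⊢
  obtain ⟨s, p, q, rfl, rfl, rfl, a1, a2, a3⟩ := hs
  refine ⟨F s, F p, F q, (hf _).symm, (hf _).symm, (hf _).symm, F.strictMono a1, F.strictMono a2, ?_⟩
  rw [← h1]
  exact F.strictMono a3

theorem volume_arc_pos {s t : ℝ} (hs : 0 ≤ s) (hst : s < t) (ht : t ≤ 1) :
    0 < (volume : Measure T1) {w | s < lift1 w ∧ lift1 w < t} := by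
  have hm : MeasurableSet {w : T1 | s < lift1 w ∧ lift1 w < t} :=
    lift1_measurable measurableSet_Ioo
  rw [AddCircle.add_projection_respects_measure (1:ℝ) 0 hm]
  have hsub : Ioo s t ⊆ (QuotientAddGroup.mk ⁻¹' {w : T1 | s < lift1 w ∧ lift1 w < t}) ∩
      Ioc (0:ℝ) (0 + 1) := by
    intro y hy
    refine ⟨?_, by linarith [hy.1], by linarith [hy.2]⟩
    have : lift1 (y : T1) = y := lift1_coe_of_mem (by linarith [hy.1]) (by linarith [hy.2])
    change s < lift1 (y : T1) ∧ lift1 (y : T1) < t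
    rw [this]; exact hy
  refine lt_of_lt_of_le ?_ (measure_mono hsub)
  rw [Real.volume_Ioo]
  simpa using hst

theorem volume_singleton_T1 (y : T1) : (volume : Measure T1) {y} = 0 := by
  have := AddCircle.volume_closedBall (1:ℝ) (x := y) 0
  simpa using this

/-- the map `f̃` of the Denjoy construction extends to an
orientation-preserving circle homeomorphism `f` with `f(Iₙ) = I_{n+1}`, wandering
open intervals `int Iₙ`, semiconjugate to `R` via `h`; in particular `f` is of Denjoy
type (irrational rotation number and a wandering open interval). -/
theorem stmt11 (ρ : ℝ) (hρ : Irrational ρ)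
    (x₀ : T1) (x : ℤ → T1) (hx : ∀ n : ℤ, x n = x₀ + n • (ρ : T1))
    (h0 : (0 : T1) ∉ Set.range x)
    (a : ℤ → ℝ) (ha : ∀ n, 0 < a n) (hsum : Summable a) (hlt : (∑' n : ℤ, a n) < 1)
    (ν : Measure T1)
    (hν : ν = Measure.sum (fun n : ℤ => ENNReal.ofReal (a n) • Measure.dirac (x n)) +
      ENNReal.ofReal (1 - ∑' n : ℤ, a n) • volume)
    (h : T1 → T1)
    (hmin : ∀ z, ENNReal.ofReal (lift1 z) ≤ ν {w | lift1 w ≤ lift1 (h z)} ∧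
      ∀ y, ENNReal.ofReal (lift1 z) ≤ ν {w | lift1 w ≤ lift1 y} → lift1 (h z) ≤ lift1 y)
    (c d : ℤ → T1)
    (hcd : ∀ n : ℤ, h ⁻¹' {x n} = {z | lift1 (c n) ≤ lift1 z ∧ lift1 z ≤ lift1 (d n)})
    (A : Set T1)
    (hA : A = Set.univ \ ⋃ n : ℤ, {z | lift1 (c n) ≤ lift1 z ∧ lift1 z < lift1 (d n)})
    (hbij : Set.BijOn h A Set.univ) :
    ∃ f : T1 ≃ₜ T1,
      (∀ z ∈ A, f z ∈ A) ∧
      (∀ u v w : T1, sbtw u v w → sbtw (f u) (f v) (f w)) ∧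
      (∀ n : ℤ, f '' {z | lift1 (c n) ≤ lift1 z ∧ lift1 z ≤ lift1 (d n)} =
        {z | lift1 (c (n + 1)) ≤ lift1 z ∧ lift1 z ≤ lift1 (d (n + 1))}) ∧
      (∀ n m k : ℤ, m ≠ k →
        Disjoint (zIter f.toEquiv m '' {z | lift1 (c n) < lift1 z ∧ lift1 z < lift1 (d n)})
          (zIter f.toEquiv k '' {z | lift1 (c n) < lift1 z ∧ lift1 z < lift1 (d n)})) ∧
      (∀ z : T1, h (f z) = h z + (ρ : T1)) ∧
      (∃ F : CircleDeg1Lift, (∀ t : ℝ, ((F t : ℝ) : T1) = f ((t : ℝ) : T1)) ∧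
        Irrational F.translationNumber) := by
  -- basic facts on `ν`
  have hb : 0 < 1 - ∑' n : ℤ, a n := by linarith
  have hmass : ν univ = 1 := by
    rw [hν]
    simp only [Measure.coe_add, Pi.add_apply, Measure.smul_apply, smul_eq_mul,
      Measure.sum_apply _ MeasurableSet.univ, measure_univ, mul_one, AddCircle.measure_univ,
      ENNReal.ofReal_one]
    rw [← ENNReal.ofReal_tsum_of_nonneg (fun n => (ha n).le) hsum,
      ← ENNReal.ofReal_add (tsum_nonneg fun n => (ha n).le) hb.le]
    simp
  haveI : IsProbabilityMeasure ν := ⟨hmass⟩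
  have harc : ∀ s t : ℝ, 0 ≤ s → s < t → t ≤ 1 → 0 < ν.real {w | s < lift1 w ∧ lift1 w < t} := by
    intro s t hs hst ht
    rw [measureReal_def]
    refine ENNReal.toReal_pos (ne_of_gt ?_) (measure_ne_top _ _)
    rw [hν, Measure.coe_add, Pi.add_apply, Measure.smul_apply, smul_eq_mul]
    refine lt_of_lt_of_le ?_ le_add_self
    exact ENNReal.mul_pos (by simpa using hb) (volume_arc_pos hs hst ht).ne'
  have hatom : ∀ y : T1, ν.real {y} = 0 ↔ y ∉ range x := by
    intro y
    rw [measureReal_def, ENNReal.toReal_eq_zero_iff]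
    simp only [measure_ne_top, or_false]
    rw [hν, Measure.coe_add, Pi.add_apply, Measure.smul_apply, volume_singleton_T1,
      Measure.sum_apply _ (measurableSet_singleton y)]
    simp only [mul_zero, add_zero, ENNReal.tsum_eq_zero, Measure.smul_apply, smul_eq_mul, mem_range,
      not_exists]
    refine forall_congr' fun n => ?_
    rw [Measure.dirac_apply' _ (measurableSet_singleton y)]
    have := ha n
    by_cases hxy : x n = y
    · simp [hxy, this]
    · simp [hxy]
  have hmle : ∀ t : ℝ, MeasurableSet {w : T1 | lift1 w ≤ t} := fun t =>
    lift1_measurable measurableSet_Iic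
  have hmlt : ∀ t : ℝ, MeasurableSet {w : T1 | lift1 w < t} := fun t =>
    lift1_measurable measurableSet_Iio
  obtain ⟨Kc, hKc⟩ : ∃ Kc : T1 → ℝ, ∀ y, Kc y = ν.real {w | lift1 w ≤ lift1 y} :=
    ⟨_, fun _ => rfl⟩
  obtain ⟨Lc, hLc⟩ : ∃ Lc : T1 → ℝ, ∀ y, Lc y = ν.real {w | lift1 w < lift1 y} :=
    ⟨_, fun _ => rfl⟩
  have hL0 : ∀ y, 0 ≤ Lc y := fun y => by rw [hLc]; exact measureReal_nonneg
  have hmarc : ∀ s t : ℝ, MeasurableSet {w : T1 | s < lift1 w ∧ lift1 w < t} := fun s t =>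
    lift1_measurable measurableSet_Ioo
  have hdis : ∀ s t : ℝ, Disjoint {w : T1 | lift1 w ≤ s} {w | s < lift1 w ∧ lift1 w < t} := by
    intro s t
    rw [Set.disjoint_left]
    intro w hw hw'
    exact absurd hw'.1 (not_lt.2 hw)
  have hK1 : ∀ y, Kc y < 1 := by
    intro y
    have h1 := harc (lift1 y) 1 (lift1_nonneg y) (lift1_lt_one y) le_rfl
    have h2 := measureReal_union (μ := ν) (hdis (lift1 y) 1) (hmarc _ _)
    have h3 := measureReal_le_one (μ := ν)
      (s := {w : T1 | lift1 w ≤ lift1 y} ∪ {w | lift1 y < lift1 w ∧ lift1 w < 1})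
    rw [hKc]
    linarith
  have hKL : ∀ y y', lift1 y < lift1 y' → Kc y < Lc y' := by
    intro y y' hy
    have h1 := harc (lift1 y) (lift1 y') (lift1_nonneg y) hy (lift1_lt_one y').le
    have h2 := measureReal_union (μ := ν) (hdis (lift1 y) (lift1 y')) (hmarc _ _)
    have h3 : ν.real ({w : T1 | lift1 w ≤ lift1 y} ∪ {w | lift1 y < lift1 w ∧ lift1 w < lift1 y'}) ≤
        ν.real {w : T1 | lift1 w < lift1 y'} := by
      apply measureReal_mono _ (measure_ne_top _ _)
      rintro w (hw | hw)
      · exact lt_of_le_of_lt hw hy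
      · exact hw.2
    rw [hKc, hLc]
    linarith
  have hKLadd : ∀ y, Kc y = Lc y + ν.real {y} := by
    intro y
    rw [hKc, hLc, ← measureReal_union _ (measurableSet_singleton y)]
    · congr 1
      ext w
      simp only [mem_setOf_eq, mem_union, mem_singleton_iff]
      constructor
      · intro hw
        rcases hw.lt_or_eq with h' | h'
        · exact Or.inl h'
        · exact Or.inr (lift1_inj h')
      · rintro (hw | rfl)
        · exact hw.le
        · exact le_rfl
    · rw [Set.disjoint_singleton_right]
      simp
  have hLKc : ∀ y, Lc y ≤ Kc y := fun y => by
    rw [hKLadd]; linarith [measureReal_nonneg (μ := ν) (s := {y})]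
  have hKLiff : ∀ y, Kc y = Lc y ↔ y ∉ range x := by
    intro y
    rw [← hatom, hKLadd]
    simp
  -- the quantile map
  have hq1 : ∀ z, lift1 z ≤ Kc (h z) := by
    intro z
    rw [hKc, measureReal_def]
    exact (ENNReal.ofReal_le_iff_le_toReal (measure_ne_top _ _)).1 (hmin z).1
  have hq2 : ∀ z, Lc (h z) ≤ lift1 z := by
    intro z
    have hz : ∀ y, lift1 y < lift1 (h z) → ν {w | lift1 w ≤ lift1 y} ≤ ENNReal.ofReal (lift1 z) := by
      intro y hy
      by_contra hc
      exact absurd ((hmin z).2 y (not_le.1 hc).le) (not_le.2 hy)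
    rw [hLc, measureReal_def]
    refine ENNReal.toReal_le_of_le_ofReal (lift1_nonneg z) ?_
    rcases (lift1_nonneg (h z)).eq_or_lt with h' | h'
    · have : {w : T1 | lift1 w < lift1 (h z)} = ∅ := by
        ext w
        simp [← h', lift1_nonneg w]
      rw [this]; simp
    · obtain ⟨u, hu1, hu2, hu3⟩ := exists_seq_strictMono_tendsto' h'
      have hun : {w : T1 | lift1 w < lift1 (h z)} = ⋃ n, {w : T1 | lift1 w ≤ u n} := by
        ext w
        simp only [mem_setOf_eq, mem_iUnion]
        constructor
        · intro hw
          obtain ⟨n, hn⟩ := (hu3.eventually (lt_mem_nhds hw)).exists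
          exact ⟨n, hn.le⟩
        · rintro ⟨n, hn⟩
          exact lt_of_le_of_lt hn (hu2 n).2
      have hmon : Monotone fun n => {w : T1 | lift1 w ≤ u n} := by
        intro n m hnm w hw
        exact le_trans hw (hu1.monotone hnm)
      rw [hun, hmon.measure_iUnion]
      refine iSup_le fun n => ?_
      have hl : lift1 ((u n : ℝ) : T1) = u n :=
        lift1_coe_of_mem (hu2 n).1.le ((hu2 n).2.trans (lift1_lt_one _))
      have := hz (u n : T1) (by rw [hl]; exact (hu2 n).2)
      rwa [hl] at this
  -- lifts to the line
  obtain ⟨K, hKdef⟩ : ∃ K : ℝ → ℝ, ∀ y, K y = Kc (y : T1) + ⌊y⌋ := ⟨_, fun _ => rfl⟩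
  obtain ⟨L, hLdef⟩ : ∃ L : ℝ → ℝ, ∀ y, L y = Lc (y : T1) + ⌊y⌋ := ⟨_, fun _ => rfl⟩
  obtain ⟨H, hHdef⟩ : ∃ H : ℝ → ℝ, ∀ s, H s = lift1 (h (s : T1)) + ⌊s⌋ := ⟨_, fun _ => rfl⟩
  have hHcoe : ∀ s : ℝ, ((H s : ℝ) : T1) = h (s : T1) := by
    intro s
    rw [hHdef, coe_add_intCast, coe_lift1]
  have hHfl : ∀ s : ℝ, ⌊H s⌋ = ⌊s⌋ := by
    intro s
    rw [hHdef, Int.floor_add_intCast, Int.floor_eq_zero_iff.2 ⟨lift1_nonneg _, lift1_lt_one _⟩,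
      zero_add]
  have hls : ∀ s : ℝ, lift1 (s : T1) + ⌊s⌋ = s := fun s => by
    rw [lift1_coe]; exact Int.fract_add_floor s
  have hlt' : ∀ y y', y < y' → K y < L y' := by
    intro y y' hy
    rw [hKdef, hLdef]
    rcases (Int.floor_mono hy.le).eq_or_lt with h' | h'
    · rw [h', add_lt_add_iff_right]
      apply hKL
      have e1 := hls y
      have e2 := hls y'
      rw [h'] at e1
      linarith
    · have : (⌊y⌋ : ℝ) + 1 ≤ ⌊y'⌋ := by exact_mod_cast h'
      linarith [hK1 (y : T1), hL0 (y' : T1)]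
  have hH1 : ∀ s, L (H s) ≤ s := by
    intro s
    rw [hLdef, hHcoe, hHfl]
    linarith [hq2 (s : T1), hls s]
  have hH2 : ∀ s, s ≤ K (H s) := by
    intro s
    rw [hKdef, hHcoe, hHfl]
    linarith [hq1 (s : T1), hls s]
  have hxs : ∀ n, x (n + 1) = x n + (ρ : T1) := by
    intro n
    rw [hx, hx, add_smul, one_smul, add_assoc]
  have hrange : ∀ y : T1, y ∈ range x ↔ y + (ρ : T1) ∈ range x := by
    intro y
    constructor
    · rintro ⟨n, rfl⟩
      exact ⟨n + 1, hxs n⟩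
    · rintro ⟨n, hn⟩
      refine ⟨n - 1, ?_⟩
      have := hxs (n - 1)
      rw [sub_add_cancel, hn] at this
      exact (add_right_cancel this).symm
  have hj : ∀ y, K y = L y ↔ K (y + ρ) = L (y + ρ) := by
    intro y
    rw [hKdef, hLdef, hKdef, hLdef, add_left_inj, add_left_inj, hKLiff, hKLiff, AddCircle.coe_add,
      not_iff_not]
    exact hrange _
  obtain ⟨F, hHF, hF1, hFK, hHm, hHa⟩ := denjoy_lift K L H ρ hH1 hH2 hlt'
    (fun y => by rw [hKdef, hLdef]; linarith [hLKc (y : T1)]) hj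
    (fun y => by rw [hKdef, hKdef, coe_add_one, Int.floor_add_one]; push_cast; ring)
    (fun y => by rw [hLdef, hLdef, coe_add_one, Int.floor_add_one]; push_cast; ring)
  obtain ⟨f, hf⟩ := exists_circle_homeo F hF1
  have hhf : ∀ z : T1, h (f z) = h z + (ρ : T1) := by
    intro z
    rw [← coe_lift1 z, hf, ← hHcoe, hHF, AddCircle.coe_add, hHcoe]
  -- the intervals
  have hmem : ∀ n z, (lift1 (c n) ≤ lift1 z ∧ lift1 z ≤ lift1 (d n)) ↔ h z = x n := by
    intro n z
    have := Set.ext_iff.1 (hcd n) z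
    simpa using this.symm
  -- `Kc (x n)` is the right end point
  have hKx : ∀ n, ((Kc (x n) : ℝ) : T1) = d n := by
    intro n
    have hk0 : 0 ≤ Kc (x n) := (hL0 _).trans (hLKc _)
    have hlk : lift1 ((Kc (x n) : ℝ) : T1) = Kc (x n) := lift1_coe_of_mem hk0 (hK1 _)
    have hxfl : ⌊lift1 (x n)⌋ = 0 := Int.floor_eq_zero_iff.2 ⟨lift1_nonneg _, lift1_lt_one _⟩
    have e1 : H (Kc (x n)) = lift1 (x n) := by
      apply denjoy_H_eq hH1 hH2 hlt'
      · rw [hLdef, coe_lift1, hxfl]; simpa using hLKc (x n)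
      · rw [hKdef, coe_lift1, hxfl]; simp
    have e2 : h ((Kc (x n) : ℝ) : T1) = x n := by
      rw [← hHcoe, e1, coe_lift1]
    have e3 := (hmem n _).2 e2
    have e4 : h (d n) = x n := (hmem n _).1 ⟨e3.1.trans e3.2, le_rfl⟩
    have e5 := hq1 (d n)
    rw [e4] at e5
    apply lift1_inj
    rw [hlk] at e3 ⊢
    exact le_antisymm e3.2 e5
  have hfd : ∀ n, f (d n) = d (n + 1) := by
    intro n
    have e1 : K (lift1 (x n)) = Kc (x n) := by
      rw [hKdef, coe_lift1, Int.floor_eq_zero_iff.2 ⟨lift1_nonneg _, lift1_lt_one _⟩]; simp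
    rw [← hKx, hf, ← e1, hFK, hKdef, coe_add_intCast, AddCircle.coe_add, coe_lift1, ← hxs, hKx]
  have hxinj : Function.Injective x := by
    intro n m hnm
    rw [hx, hx, add_right_inj] at hnm
    by_contra hne
    have h1 : (((n - m : ℤ) • ρ : ℝ) : T1) = 0 := by
      rw [AddCircle.coe_zsmul, sub_smul, hnm, sub_self]
    rw [AddCircle.coe_eq_zero_iff] at h1
    obtain ⟨k, hk⟩ := h1
    have hirr : Irrational (((n - m : ℤ) : ℝ) * ρ) := hρ.intCast_mul (sub_ne_zero.2 hne)
    apply hirr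
    refine ⟨k, ?_⟩
    simpa using hk
  have hiter : ∀ (m : ℤ) (z : T1), h (zIter f.toEquiv m z) = h z + m • (ρ : T1) := by
    intro m
    induction m using Int.induction_on with
    | zero => intro z; simp [zIter]
    | succ i ih =>
      intro z
      have : zIter f.toEquiv ((i : ℤ) + 1) z = f (zIter f.toEquiv i z) := by
        simp only [zIter]
        rw [add_comm, zpow_add, zpow_one]; rfl
      rw [this, hhf, ih, add_smul, one_smul, add_assoc]
    | pred i ih =>
      intro z
      have : f (zIter f.toEquiv (-(i : ℤ) - 1) z) = zIter f.toEquiv (-(i : ℤ)) z := by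
        have e : -(i : ℤ) = 1 + (-(i : ℤ) - 1) := by ring
        conv_rhs => rw [e]
        simp only [zIter]
        rw [zpow_add, zpow_one]; rfl
      have h2 := hhf (zIter f.toEquiv (-(i : ℤ) - 1) z)
      rw [this, ih] at h2
      apply add_right_cancel (b := (ρ : T1))
      rw [← h2, sub_smul, one_smul, add_assoc, sub_add_cancel]
  refine ⟨f, ?_, sbtw_map_of_lift F hF1 f hf, ?_, ?_, hhf, ?_⟩
  · intro z hz
    rw [hA] at hz ⊢
    refine ⟨mem_univ _, fun hc => ?_⟩
    obtain ⟨n, hn1, hn2⟩ := mem_iUnion.1 hc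
    have e1 := (hmem n _).1 ⟨hn1, hn2.le⟩
    have e2 := hxs (n - 1)
    rw [sub_add_cancel] at e2
    rw [hhf, e2] at e1
    have e3 := (hmem (n - 1) z).2 (add_right_cancel e1)
    rcases e3.2.lt_or_eq with h' | h'
    · exact hz.2 (mem_iUnion.2 ⟨n - 1, e3.1, h'⟩)
    · rw [lift1_inj h', hfd, sub_add_cancel] at hn2
      exact lt_irrefl _ hn2
  · intro n
    ext z
    simp only [hmem, mem_image, mem_setOf_eq]
    constructor
    · rintro ⟨w, hw, rfl⟩
      rw [hhf, hw, hxs]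
    · intro hz
      refine ⟨f.symm z, ?_, f.apply_symm_apply z⟩
      have := hhf (f.symm z)
      rw [f.apply_symm_apply, hz, hxs] at this
      exact (add_right_cancel this).symm
  · intro n m k hmk
    rw [Set.disjoint_left]
    rintro _ ⟨u, hu, rfl⟩ ⟨v, hv, hvu⟩
    have e1 := (hmem n u).1 ⟨hu.1.le, hu.2.le⟩
    have e2 := (hmem n v).1 ⟨hv.1.le, hv.2.le⟩
    have e3 := congrArg h hvu
    rw [hiter, hiter, e1, e2, hx n, add_assoc, add_assoc, ← add_smul, ← add_smul, ← hx, ← hx] at e3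
    have := hxinj e3
    omega
  · let F' : CircleDeg1Lift := ⟨⟨F, F.monotone⟩, hF1⟩
    let H' : CircleDeg1Lift := ⟨⟨H, hHm⟩, hHa⟩
    refine ⟨F', fun t => (hf t).symm, ?_⟩
    have hsemi : Function.Semiconj H' F' (CircleDeg1Lift.translate (Multiplicative.ofAdd ρ)) := by
      intro s
      rw [CircleDeg1Lift.translate_apply]
      exact (hHF s).trans (add_comm _ _)
    rw [CircleDeg1Lift.translationNumber_eq_of_semiconj hsemi,
      CircleDeg1Lift.translationNumber_translate]
    exact hρ

end
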